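/- For every integer r ≥ 1 and every finite simple graph H, the matching game on the Cartesian product K_{r,r} □ H produces a perfect matching under optimal play no matter who moves first; that is, Max(K_{r,r} □ H) = Min(K_{r,r} □ H) = r·|V(H)|. -/

import Mathlib

/-!
The product `K_{r,r} □ H` has an adjacency-preserving involution `σ`, swapping the two sides of
`K_{r,r}` and fixing the `H`-coordinate, for which every vertex `x` is adjacent to `σ x`.
On any graph with such a `σ` the game is perfect on every `σ`-invariant set `s` of remaining
vertices, whoever moves (`card_le_two_mul_gameValue`): Max, when to move, plays an edge `x, σ x`,
which keeps the set invariant. If Min plays `x, σ x`, the set is invariant again; if Min plays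
`u, v` with `v ≠ σ u`, then `σ u, σ v` is a legal reply that restores invariance.
The upper bound is the trivial one: each move deletes two vertices.
-/

open Finset

variable {V : Type*} [DecidableEq V]

/-- The legal moves in the matching game on `G` when the set of remaining
(undeleted) vertices is `s`: ordered pairs of adjacent remaining vertices. -/
def matchPlays (G : SimpleGraph V) [DecidableRel G.Adj] (s : Finset V) :
    Finset (V × V) :=
  (s ×ˢ s).filter fun p => G.Adj p.1 p.2

lemma matchPlays_card {G : SimpleGraph V} [DecidableRel G.Adj] {s : Finset V}
    {p : V × V} (hp : p ∈ matchPlays G s) :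
    (s \ {p.1, p.2}).card < s.card := by
  simp only [matchPlays, mem_filter, mem_product] at hp
  refine card_lt_card (Finset.sdiff_ssubset ?_ ⟨p.1, mem_insert_self _ _⟩)
  intro x hx
  rcases mem_insert.mp hx with h | h
  · exact h ▸ hp.1.1
  · exact (mem_singleton.mp h) ▸ hp.1.2

/-- The value of the matching game on the subgraph of `G` induced by the vertex
set `s`, with Max to move if `maxTurn = true` and Min to move otherwise:
the number of *further* edges added to the matching under optimal play. -/
def gameValue (G : SimpleGraph V) [DecidableRel G.Adj] (maxTurn : Bool)
    (s : Finset V) : ℕ :=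
  if h : (matchPlays G s).Nonempty then
    if maxTurn then
      (matchPlays G s).attach.sup
        fun p => 1 + gameValue G false (s \ {p.1.1, p.1.2})
    else
      (matchPlays G s).attach.inf' (by simpa using h)
        fun p => 1 + gameValue G true (s \ {p.1.1, p.1.2})
  else 0
termination_by s.card
decreasing_by
  · exact matchPlays_card p.2
  · exact matchPlays_card p.2

/-- The Max-start game matching number `Max(G)`. -/
noncomputable def gameMax [Fintype V] (G : SimpleGraph V) : ℕ :=
  letI : DecidableRel G.Adj := Classical.decRel _
  gameValue G true Finset.univ

/-- The Min-start game matching number `Min(G)`. -/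
noncomputable def gameMin [Fintype V] (G : SimpleGraph V) : ℕ :=
  letI : DecidableRel G.Adj := Classical.decRel _
  gameValue G false Finset.univ

/-- `M` is a matching in `G`: a set of edges of `G` that are pairwise
vertex-disjoint. -/
def IsMatchingSet (G : SimpleGraph V) (M : Finset (Sym2 V)) : Prop :=
  (∀ e ∈ M, e ∈ G.edgeSet) ∧
    ∀ e ∈ M, ∀ f ∈ M, e ≠ f → ∀ v : V, v ∈ e → v ∉ f

/-- The matching number `α'(G)`: the maximum size of a matching in `G`. -/
noncomputable def matchingNumber (G : SimpleGraph V) : ℕ :=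
  sSup {n | ∃ M : Finset (Sym2 V), IsMatchingSet G M ∧ M.card = n}

section Game

variable {G : SimpleGraph V} [DecidableRel G.Adj] {s : Finset V}

lemma mem_matchPlays {p : V × V} :
    p ∈ matchPlays G s ↔ (p.1 ∈ s ∧ p.2 ∈ s) ∧ G.Adj p.1 p.2 := by
  simp [matchPlays]

lemma card_sdiff_play {u v : V} (hu : u ∈ s) (hv : v ∈ s) (h : u ≠ v) :
    (s \ {u, v}).card + 2 = s.card := by
  have hsub : ({u, v} : Finset V) ⊆ s := by
    intro x hx
    simp only [mem_insert, mem_singleton] at hx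
    rcases hx with rfl | rfl <;> assumption
  have h1 := card_sdiff_add_card_eq_card hsub
  rwa [card_pair h] at h1

lemma le_gameValue_true {u v : V} (hu : u ∈ s) (hv : v ∈ s) (h : G.Adj u v) :
    1 + gameValue G false (s \ {u, v}) ≤ gameValue G true s := by
  have hp : (u, v) ∈ matchPlays G s := mem_matchPlays.2 ⟨⟨hu, hv⟩, h⟩
  conv_rhs => rw [gameValue]
  rw [dif_pos ⟨_, hp⟩, if_pos rfl]
  exact Finset.le_sup (f := fun p : {x // x ∈ matchPlays G s} =>
    1 + gameValue G false (s \ {p.1.1, p.1.2})) (mem_attach _ ⟨(u, v), hp⟩)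

/-- If any move is available, then an optimal one is. -/
lemma exists_gameValue_eq (b : Bool) (h : (matchPlays G s).Nonempty) :
    ∃ u ∈ s, ∃ v ∈ s, G.Adj u v ∧
      gameValue G b s = 1 + gameValue G (!b) (s \ {u, v}) := by
  have hne : (matchPlays G s).attach.Nonempty := by simpa using h
  have key : ∃ p ∈ (matchPlays G s).attach,
      gameValue G b s = 1 + gameValue G (!b) (s \ {p.1.1, p.1.2}) := by
    rw [gameValue, dif_pos h]
    cases b
    · rw [if_neg (by simp)]
      exact exists_mem_eq_inf' _ _
    · rw [if_pos rfl]
      exact exists_mem_eq_sup _ hne _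
  obtain ⟨⟨p, hp⟩, -, he⟩ := key
  obtain ⟨⟨h1, h2⟩, h3⟩ := mem_matchPlays.1 hp
  exact ⟨p.1, h1, p.2, h2, h3, he⟩

lemma two_mul_gameValue_le (n : ℕ) : ∀ (s : Finset V) (b : Bool), s.card = n →
    2 * gameValue G b s ≤ s.card := by
  induction n using Nat.strong_induction_on with
  | _ n ih =>
    intro s b hs
    by_cases h : (matchPlays G s).Nonempty
    · obtain ⟨u, hu, v, hv, hadj, he⟩ := exists_gameValue_eq b h
      have hc := card_sdiff_play hu hv hadj.ne
      have := ih _ (by omega) (s \ {u, v}) (!b) rfl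
      omega
    · rw [gameValue, dif_neg h]
      omega

/-- The pairing strategy: on a `σ`-invariant set of remaining vertices, Max forces all of them
to be matched. -/
lemma card_le_two_mul_gameValue {σ : V → V} (hinv : ∀ x, σ (σ x) = x)
    (hadj : ∀ x, G.Adj x (σ x)) (hmap : ∀ x y, G.Adj x y → G.Adj (σ x) (σ y)) (n : ℕ) :
    ∀ (s : Finset V) (b : Bool), s.card = n → (∀ x ∈ s, σ x ∈ s) →
      s.card ≤ 2 * gameValue G b s := by
  induction n using Nat.strong_induction_on with
  | _ n ih =>
    intro s b hn hs
    have hpair : ∀ x, ∀ y ∈ s \ {x, σ x}, σ y ∈ s \ {x, σ x} := by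
      intro x y hy
      have h1 := hs y
      have h2 := hinv y
      have h3 := hinv x
      grind
    rcases s.eq_empty_or_nonempty with rfl | ⟨x, hx⟩
    · simp
    have hxx : (matchPlays G s).Nonempty :=
      ⟨(x, σ x), mem_matchPlays.2 ⟨⟨hx, hs x hx⟩, hadj x⟩⟩
    cases b with
    | true =>
      have h1 := le_gameValue_true hx (hs x hx) (hadj x)
      have hc := card_sdiff_play hx (hs x hx) (hadj x).ne
      have := ih _ (by omega) (s \ {x, σ x}) false rfl (hpair x)
      omega
    | false =>
      obtain ⟨u, hu, v, hv, huv, he⟩ := exists_gameValue_eq false hxx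
      rw [he]
      have hc := card_sdiff_play hu hv huv.ne
      by_cases hvu : v = σ u
      · have := ih _ (by omega) (s \ {u, v}) true rfl (by rw [hvu]; exact hpair u)
        simp only [Bool.not_false]
        omega
      -- The reply `σ u, σ v` of Max is disjoint from the edge `u, v` played by Min.
      · have iu := hinv u
        have iv := hinv v
        have au := (hadj u).ne
        have av := (hadj v).ne
        have hu' : σ u ∈ s \ {u, v} := by
          have := hs u hu
          grind
        have hv' : σ v ∈ s \ {u, v} := by
          have := hs v hv
          grind
        have hr := hmap u v huv
        have h1 := le_gameValue_true hu' hv' hr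
        have hc' := card_sdiff_play hu' hv' hr.ne
        have := ih _ (by omega) ((s \ {u, v}) \ {σ u, σ v}) false rfl (by
          intro y hy
          have h1 := hs y
          have h2 := hinv y
          grind)
        simp only [Bool.not_false]
        omega

end Game

/-- on `K_{r,r} □ H` the matching game always produces a perfect
matching: `Max = Min = r * |V(H)|`. -/
theorem stmt5 {W : Type*} [Fintype W] [DecidableEq W] (r : ℕ) (hr : 1 ≤ r)
    (H : SimpleGraph W) :
    gameMax (SimpleGraph.boxProd (completeBipartiteGraph (Fin r) (Fin r)) H)
        = r * Fintype.card W ∧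
    gameMin (SimpleGraph.boxProd (completeBipartiteGraph (Fin r) (Fin r)) H)
        = r * Fintype.card W := by
  let : DecidableRel
      (SimpleGraph.boxProd (completeBipartiteGraph (Fin r) (Fin r)) H).Adj := Classical.decRel _
  have key : ∀ b, gameValue (SimpleGraph.boxProd (completeBipartiteGraph (Fin r) (Fin r)) H) b
      Finset.univ = r * Fintype.card W := by
    intro b
    have hcard : (Finset.univ : Finset ((Fin r ⊕ Fin r) × W)).card
        = 2 * (r * Fintype.card W) := by
      simp only [card_univ, Fintype.card_prod, Fintype.card_sum, Fintype.card_fin]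
      ring
    have hle := two_mul_gameValue_le
      (G := SimpleGraph.boxProd (completeBipartiteGraph (Fin r) (Fin r)) H) _ Finset.univ b rfl
    have hge := card_le_two_mul_gameValue
      (G := SimpleGraph.boxProd (completeBipartiteGraph (Fin r) (Fin r)) H)
      (σ := fun p => (p.1.swap, p.2)) (by simp)
      (by rintro ⟨a | a, w⟩ <;> simp [SimpleGraph.boxProd_adj])
      (by rintro ⟨a | a, w⟩ ⟨b | b, w'⟩ <;> simp [SimpleGraph.boxProd_adj])
      _ Finset.univ b rfl (by simp)
    omega
  exact ⟨key true, key false⟩
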